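/- For every program p, both the graph G = {(x,y) ∈ 2^ℕ × 2^ℕ : φ_p(x) halts with output y} and its complement (2^ℕ × 2^ℕ) \ G are projections of coanalytic sets: each equals {(x,y) : ∃ z ∈ 2^ℕ, (x,y,z) ∈ C} for some coanalytic C ⊆ 2^ℕ × 2^ℕ × 2^ℕ (products carrying the product topology). Consequently every infinite time semi-decidable subset of 2^ℕ, as well as its complement, is the projection of a coanalytic subset of 2^ℕ × 2^ℕ. -/

import Mathlib

open scoped Classical

namespace ITTM

/-- A real is an element of Cantor space. -/
abbrev R := ℕ → Bool

/-- The constant-zero real. -/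
def zeroR : R := fun _ => false

/-- The real ⟨1,0,0,...⟩ coding the answer "Yes". -/
def oneR : R := fun n => decide (n = 0)

/-- The real coding a natural number `p`: `p` ones followed by zeros. -/
def natR (p : ℕ) : R := fun n => decide (n < p)

/-- The real coding the pair of reals `(y, z)`. -/
def pairR (y z : R) : R := fun n => if n % 2 = 0 then y (n / 2) else z (n / 2)

/-- A snapshot of an infinite time Turing machine computation with state set
`Fin (Q+1)`: the current state, the head position, and the contents of the
three tapes (tape 0 is the input tape, tape 1 the scratch tape, tape 2 the
output tape); cells hold values in `Bool` (`true` = 1, `false` = 0). -/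
structure Snapshot (Q : ℕ) where
  state : Fin (Q + 1)
  head : ℕ
  tape : Fin 3 → ℕ → Bool

/-- An infinite time Turing machine program: a finite set of states
`Fin (Q+1)` with distinguished start, limit and halt states, and a finite
transition table which, given the current state and the three cell values
read by the head, specifies the next state, the three values to write, and
the direction to move (`true` = right, `false` = left). -/
structure Machine where
  Q : ℕ
  start : Fin (Q + 1)
  limit : Fin (Q + 1)
  halt : Fin (Q + 1)
  trans : Fin (Q + 1) × (Fin 3 → Bool) → Fin (Q + 1) × (Fin 3 → Bool) × Bool

instance : Inhabited Machine := ⟨⟨0, 0, 0, 0, fun _ => (0, fun _ => false, true)⟩⟩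

namespace Machine

/-- The initial snapshot on input `x`: head on cell 0 in the start state, `x`
on the input tape, the other tapes filled with zeros. -/
def init (M : Machine) (x : R) : Snapshot M.Q where
  state := M.start
  head := 0
  tape := fun i n => if i = 0 then x n else false

/-- One step of computation applied to a snapshot. -/
def stepSnap (M : Machine) (s : Snapshot M.Q) : Snapshot M.Q :=
  let t := M.trans (s.state, fun i => s.tape i s.head)
  { state := t.1
    head := if t.2.2 then s.head + 1 else s.head - 1
    tape := fun i n => if n = s.head then t.2.1 i else s.tape i n }

/-- The snapshot of the computation of machine `M` on input `x` at ordinal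
stage `α`, defined by transfinite recursion: at stage 0 the initial snapshot,
at successor stages the transition table is applied, and at limit stages the
head is on cell 0 in the limit state and each cell holds the `limsup` of its
earlier values (1 iff its value was 1 cofinally often below the limit). -/
noncomputable def snap (M : Machine) (x : R) : Ordinal.{0} → Snapshot M.Q :=
  WellFounded.fix Ordinal.lt_wf fun α ih =>
    if _h0 : α = 0 then M.init x
    else if hs : ∃ β, β < α ∧ α = β + 1 then
      M.stepSnap (ih hs.choose hs.choose_spec.1)
    else
      { state := M.limit
        head := 0
        tape := fun i n =>
          decide (∀ β < α, ∃ γ, β ≤ γ ∧ ∃ hγ : γ < α, (ih γ hγ).tape i n = true) }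

/-- The machine is in the halt state at stage `α`. -/
def haltedAt (M : Machine) (x : R) (α : Ordinal) : Prop :=
  (M.snap x α).state = M.halt

/-- The computation of `M` on input `x` halts exactly at stage `α`: stage `α`
is the first stage at which the machine is in the halt state. -/
def haltsAt (M : Machine) (x : R) (α : Ordinal) : Prop :=
  M.haltedAt x α ∧ ∀ β < α, ¬ M.haltedAt x β

/-- The computation of `M` on input `x` halts. -/
def halts (M : Machine) (x : R) : Prop := ∃ α, M.haltedAt x α

/-- The computation of `M` on input `x` halts with output `y`: at the first
stage at which the machine is in the halt state, the output tape reads `y`. -/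
def outputs (M : Machine) (x y : R) : Prop :=
  ∃ α, M.haltsAt x α ∧ (M.snap x α).tape 2 = y

end Machine

/-- Machines are coded by natural numbers. -/
noncomputable instance : Encodable Machine :=
  Encodable.ofEquiv
    (Σ Q : ℕ, (Fin (Q + 1) × Fin (Q + 1) × Fin (Q + 1)) ×
      ((Fin (Q + 1) × (Fin 3 → Bool)) → Fin (Q + 1) × (Fin 3 → Bool) × Bool))
    { toFun := fun M => ⟨M.Q, (M.start, M.limit, M.halt), M.trans⟩
      invFun := fun s => ⟨s.1, s.2.1.1, s.2.1.2.1, s.2.1.2.2, s.2.2⟩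
      left_inv := fun _ => rfl
      right_inv := fun _ => rfl }

/-- The machine coded by the natural number `p`; every natural number codes a
machine, and every machine is coded by some natural number. -/
noncomputable def prog (p : ℕ) : Machine :=
  ((Encodable.decode p : Option Machine)).getD default

/-- `φ_p(x)` halts with output `y`. -/
noncomputable def phiOutputs (p : ℕ) (x y : R) : Prop := (prog p).outputs x y

/-- A set of reals is infinite time decidable when some machine, on any input
`x`, halts with output ⟨1,0,0,...⟩ if `x ∈ A` and output ⟨0,0,0,...⟩ if
`x ∉ A`. -/
def ITTMDecidable (A : Set R) : Prop :=
  ∃ M : Machine, ∀ x : R, (x ∈ A → M.outputs x oneR) ∧ (x ∉ A → M.outputs x zeroR)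

/-- A set of reals is infinite time semi-decidable when it is the halting set
of some machine. -/
def ITTMSemiDecidable (A : Set R) : Prop :=
  ∃ M : Machine, A = {x : R | M.halts x}

/-- The binary relation on ℕ coded by the real `x`:
`n ◁ k ⟺ x(⟨n,k⟩) = 1` where `⟨·,·⟩` is the pairing function. -/
def rel (x : R) (n k : ℕ) : Prop := x (Nat.pair n k) = true

/-- The field of the relation coded by `x`. -/
def field (x : R) : Set ℕ := {n | ∃ k, rel x n k ∨ rel x k n}

/-- The relation coded by `x`, restricted to its field. -/
def relOn (x : R) : field x → field x → Prop := fun a b => rel x a.1 b.1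

/-- The real `x` codes a well-order of (a subset of) ℕ, namely its field. -/
def codesWellOrder (x : R) : Prop := IsWellOrder (field x) (relOn x)

/-- The set of reals coding well-orders. -/
def WO : Set R := {x | codesWellOrder x}

/-- The real `x` codes a well-order of order type `α`. -/
def codesOrdinal (x : R) (α : Ordinal) : Prop :=
  ∃ h : codesWellOrder x, @Ordinal.type _ (relOn x) h = α

/-- An ordinal is clockable when some machine on input 0 halts exactly at
stage `α`. -/
def Clockable (α : Ordinal) : Prop := ∃ M : Machine, M.haltsAt zeroR α

/-- A real is writable when it is the output of some machine on input 0. -/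
def WritableReal (x : R) : Prop := ∃ M : Machine, M.outputs zeroR x

/-- An ordinal is writable when some writable real codes a well-order of that
order type. -/
def WritableOrdinal (α : Ordinal) : Prop :=
  ∃ x : R, WritableReal x ∧ codesOrdinal x α

/-- A real is eventually writable when some machine on input 0 never halts,
but from some stage onward the content of its output tape is exactly `x`. -/
def EventuallyWritableReal (x : R) : Prop :=
  ∃ M : Machine, ¬ M.halts zeroR ∧ ∃ α : Ordinal, ∀ β ≥ α, (M.snap zeroR β).tape 2 = x

/-- An ordinal is eventually writable when some eventually writable real codes
a well-order of that order type. -/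
def EventuallyWritableOrdinal (α : Ordinal) : Prop :=
  ∃ x : R, EventuallyWritableReal x ∧ codesOrdinal x α

end ITTM

/-- A subset of the plane `2^ℕ × 2^ℕ` is the projection of a coanalytic
subset of `2^ℕ × 2^ℕ × 2^ℕ` (i.e. it is `Σ¹₂`). -/
def IsProjCoanalytic2 (S : Set (ITTM.R × ITTM.R)) : Prop :=
  ∃ C : Set (ITTM.R × ITTM.R × ITTM.R), MeasureTheory.AnalyticSet Cᶜ ∧
    S = {q : ITTM.R × ITTM.R | ∃ z : ITTM.R, (q.1, q.2, z) ∈ C}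

/-- A subset of `2^ℕ` is the projection of a coanalytic subset of
`2^ℕ × 2^ℕ` (i.e. it is `Σ¹₂`). -/
def IsProjCoanalytic1 (A : Set ITTM.R) : Prop :=
  ∃ C : Set (ITTM.R × ITTM.R), MeasureTheory.AnalyticSet Cᶜ ∧
    A = {x : ITTM.R | ∃ z : ITTM.R, (x, z) ∈ C}

/-!
There are only countably many cells, so below a stage `c` of uncountable cofinality all the cells
showing `0` at `c` have settled from some common stage on, and by closing off under witnesses for
the cells showing `1` one finds arbitrarily late limit stages with the same snapshot as `c`. For
`c = ω₁` this yields countable stages `α < β` with the same limit snapshot such that no cell showing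
`0` at `α` shows `1` in between; from then on the computation is periodic, so it never halts unless
it has halted before `ω₁`. Hence both halting (with a given output) and not halting are witnessed by
a countable run. Such a run is coded by a relation on `ℕ` comparing named stages together with the
snapshots at these stages. Being the code of a run is a Borel condition except for the
well-foundedness of the relation, which is coanalytic, and so quantifying existentially over codes
gives `Σ¹₂` sets.
-/

namespace ITTM

open Cardinal Order Ordinal MeasureTheory

/-- Cofinal recurrence: `P` holds at arbitrarily large stages below `α`. This is the condition for
a cell to show `1` at the limit stage `α`. -/
def FrequentlyBelow {o : Type*} [Preorder o] (P : o → Prop) (α : o) : Prop :=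
  ∀ β < α, ∃ γ, β ≤ γ ∧ γ < α ∧ P γ

namespace FrequentlyBelow

theorem of_isNormal {o o' : Type*} [LinearOrder o] [LinearOrder o'] {f : o → o'} {P : o' → Prop}
    {η : o} (hf : IsNormal f) (hη : IsSuccLimit η) (h : FrequentlyBelow (fun ξ => P (f ξ)) η) :
    FrequentlyBelow P (f η) := by
  intro β hβ
  obtain ⟨ξ, hξη, hβξ⟩ := (hf.lt_iff_exists_lt hη).1 hβ
  obtain ⟨ζ, hξζ, hζη, hζ⟩ := h ξ hξη
  exact ⟨f ζ, hβξ.le.trans (hf.strictMono.monotone hξζ), hf.strictMono hζη, hζ⟩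

theorem add_iff {P : Ordinal → Prop} {α η : Ordinal} (hη : IsSuccLimit η) :
    FrequentlyBelow P (α + η) ↔ FrequentlyBelow (fun ξ => P (α + ξ)) η := by
  refine ⟨fun h ξ hξ => ?_, of_isNormal (isNormal_add_right α) hη⟩
  obtain ⟨γ, hξγ, hγη, hγ⟩ := h (α + ξ) (by gcongr)
  obtain ⟨ζ, rfl⟩ := exists_add_of_le (le_self_add.trans hξγ)
  exact ⟨ζ, by simpa using hξγ, by simpa using hγη, hγ⟩

theorem congr_of_lt {o : Type*} [Preorder o] {P P' : o → Prop} {α : o}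
    (h : ∀ γ < α, (P γ ↔ P' γ)) : FrequentlyBelow P α ↔ FrequentlyBelow P' α :=
  forall₂_congr fun _ _ => exists_congr fun γ => and_congr_right fun _ =>
    and_congr_right fun hγ => h γ hγ

variable {ι : Type*} {P : ι → Ordinal → Prop} {c : Ordinal}

theorem exists_forall_not (hι : #ι < c.cof) (h : ∀ i, ¬ FrequentlyBelow (P i) c) :
    ∃ δ < c, ∀ i γ, δ ≤ γ → γ < c → ¬ P i γ := by
  simp only [FrequentlyBelow] at h
  push Not at h
  choose δ hδc hδ using h
  exact ⟨⨆ i, δ i, iSup_lt_of_lt_cof hι hδc, fun i γ hγ => hδ i γ ((Ordinal.le_iSup δ i).trans hγ)⟩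

/-- Closing off under witnesses: the next fixed point of a function bounding, for every stage,
the next witness of each `P i` is a limit below which every `P i` recurs. -/
theorem exists_isSuccLimit_between (hc : ℵ₀ < c.cof) (hι : #ι < c.cof)
    (h : ∀ i, FrequentlyBelow (P i) c) {β : Ordinal} (hβ : β < c) :
    ∃ α, β < α ∧ α < c ∧ IsSuccLimit α ∧ ∀ i, FrequentlyBelow (P i) α := by
  have hlim : IsSuccLimit c := one_lt_cof_iff.1 (one_lt_aleph0.trans hc)
  choose! g hle hlt hP using h
  let f : Ordinal → Ordinal := fun δ => max (δ + 1) (⨆ i, g i δ + 1)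
  have hfc : ∀ δ < c, f δ < c := fun δ hδ =>
    max_lt (hlim.add_one_lt hδ) (iSup_add_one_lt_of_lt_cof hι fun i => hlt i δ hδ)
  have hlt_f : ∀ δ, δ < f δ := fun δ => (lt_add_one δ).trans_le (le_max_left _ _)
  have hf_le : ∀ n, f (f^[n] β) ≤ nfp f β := fun n =>
    (Function.iterate_succ_apply' f n β).ge.trans (iterate_le_nfp f β (n + 1))
  have hα : nfp f β < c := nfp_lt_ord hc hfc hβ
  have hstep : ∀ δ < nfp f β, ∃ δ', δ < δ' ∧ δ' < nfp f β ∧ f δ' ≤ nfp f β := fun δ hδ =>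
    let ⟨n, hn⟩ := lt_nfp_iff.1 hδ
    ⟨f^[n] β, hn, (hlt_f _).trans_le (hf_le n), hf_le n⟩
  have hβα : β < nfp f β := (hlt_f β).trans_le (hf_le 0)
  refine ⟨nfp f β, hβα, hα, ?_, fun i δ hδ => ?_⟩
  · refine Ordinal.isSuccLimit_iff.2 ⟨hβα.ne_bot, isSuccPrelimit_of_succ_lt fun δ hδ => ?_⟩
    obtain ⟨δ', hδδ', hδ', -⟩ := hstep δ hδ
    exact (succ_le_of_lt hδδ').trans_lt hδ'
  · obtain ⟨δ', hδδ', hδ', hfδ'⟩ := hstep δ hδ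
    have hg : g i δ' + 1 ≤ f δ' :=
      (Ordinal.le_iSup (fun i => g i δ' + 1) i).trans (le_max_right _ _)
    exact ⟨g i δ', hδδ'.le.trans (hle i δ' (hδ'.trans hα)),
      (lt_add_one _).trans_le (hg.trans hfδ'), hP i δ' (hδ'.trans hα)⟩

end FrequentlyBelow

theorem aleph0_lt_cof_omega_one : ℵ₀ < cof ω₁ :=
  aleph0_lt_aleph_one.trans_eq cof_omega_one.symm

theorem countable_Iic_of_lt_omega_one {α : Ordinal} (hα : α < ω₁) : (Set.Iic α).Countable := by
  have hcard : α.card < ℵ₁ := by rwa [← lt_ord, ord_aleph]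
  rw [← Set.Iio_insert, Set.countable_insert, ← le_aleph0_iff_set_countable,
    Cardinal.mk_Iio_ordinal, lift_le_aleph0]
  exact lt_aleph_one_iff.1 hcard

/-! ### Computations and loops -/

namespace Machine

variable {M : Machine} {x : R} {α β : Ordinal.{0}}

/-- The snapshot in the limit configuration (limit state, head on cell `0`) with tapes `t`. -/
def limitSnap (M : Machine) (t : Fin 3 → ℕ → Bool) : Snapshot M.Q := ⟨M.limit, 0, t⟩

theorem snap_zero : M.snap x 0 = M.init x := by
  rw [snap, WellFounded.fix_eq, dif_pos rfl]

theorem snap_add_one (α : Ordinal.{0}) : M.snap x (α + 1) = M.stepSnap (M.snap x α) := by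
  have hs : ∃ β, β < α + 1 ∧ α + 1 = β + 1 := ⟨α, lt_add_one α, rfl⟩
  have hα : hs.choose = α := (Order.succ_injective hs.choose_spec.2).symm
  rw [snap, WellFounded.fix_eq, dif_neg (by simp), dif_pos hs]
  exact congrArg (fun β => M.stepSnap (M.snap x β)) hα

theorem snap_of_isSuccLimit (hα : IsSuccLimit α) :
    M.snap x α = M.limitSnap fun i n =>
      decide (FrequentlyBelow (fun γ => (M.snap x γ).tape i n = true) α) := by
  have hsucc : ¬ ∃ β, β < α ∧ α = β + 1 := fun ⟨β, hβ, h⟩ => (hα.add_one_lt hβ).ne' h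
  rw [snap, WellFounded.fix_eq, dif_neg (show ¬ α = 0 from hα.ne_bot), dif_neg hsucc]
  simp only [exists_prop]
  rfl

theorem tape_snap_of_isSuccLimit (hα : IsSuccLimit α) (i : Fin 3) (n : ℕ) :
    (M.snap x α).tape i n = true ↔
      FrequentlyBelow (fun γ => (M.snap x γ).tape i n = true) α := by
  rw [snap_of_isSuccLimit hα]
  exact decide_eq_true_iff

theorem snap_eq_snap_iff_of_isSuccLimit (hα : IsSuccLimit α) (hβ : IsSuccLimit β) :
    M.snap x α = M.snap x β ↔
      ∀ i n, ((M.snap x α).tape i n = true ↔ (M.snap x β).tape i n = true) := by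
  refine ⟨fun h i n => by rw [h], fun h => ?_⟩
  have htape : (M.snap x α).tape = (M.snap x β).tape :=
    funext₂ fun i n => Bool.eq_iff_iff.2 (h i n)
  rw [snap_of_isSuccLimit hα, snap_of_isSuccLimit hβ] at htape ⊢
  exact congrArg M.limitSnap htape

theorem eq_snap_iff {s : Snapshot M.Q} :
    s = M.snap x α ↔ (α = 0 → s = M.init x) ∧
      (∀ β, α = β + 1 → s = M.stepSnap (M.snap x β)) ∧
      (IsSuccLimit α → s = M.limitSnap fun i n =>
        decide (FrequentlyBelow (fun γ => (M.snap x γ).tape i n = true) α)) := by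
  constructor
  · rintro rfl
    exact ⟨fun h => by rw [h, snap_zero], fun β h => by rw [h, snap_add_one],
      snap_of_isSuccLimit⟩
  · rintro ⟨hzero, hsucc, hlim⟩
    rcases zero_or_succ_or_isSuccLimit α with h | ⟨β, rfl⟩ | h
    · rw [hzero h, h, snap_zero]
    · exact (hsucc β rfl).trans (snap_add_one β).symm
    · rw [hlim h, snap_of_isSuccLimit h]

theorem snap_add_congr (h : M.snap x α = M.snap x β) (η : Ordinal.{0}) :
    M.snap x (α + η) = M.snap x (β + η) := by
  induction η using Ordinal.limitRecOn with
  | zero => simpa only [add_zero] using h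
  | add_one η ih => rw [← add_assoc, ← add_assoc, snap_add_one, snap_add_one, ih]
  | limit η hη ih =>
    have hαη := isSuccLimit_add α hη
    have hβη := isSuccLimit_add β hη
    refine (snap_eq_snap_iff_of_isSuccLimit hαη hβη).2 fun i n => ?_
    rw [tape_snap_of_isSuccLimit hαη, tape_snap_of_isSuccLimit hβη, FrequentlyBelow.add_iff hη,
      FrequentlyBelow.add_iff hη]
    exact FrequentlyBelow.congr_of_lt fun ξ hξ => by rw [ih ξ hξ]

/-- The computation of `M` on `x` repeats itself between the stages `α` and `β` without having
halted: the limit snapshot at `α` recurs at `β`, and no cell showing `0` in it shows `1` in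
between. -/
structure LoopsBetween (M : Machine) (x : R) (α β : Ordinal.{0}) : Prop where
  isSuccLimit : IsSuccLimit α
  lt : α < β
  snap_eq : M.snap x β = M.snap x α
  tape_le : ∀ γ, α ≤ γ → γ < β → (M.snap x γ).tape ≤ (M.snap x α).tape
  not_haltedAt : ∀ γ < β, ¬ M.haltedAt x γ

namespace LoopsBetween

theorem snap_add_mul_eq_of_forall_lt {δ ξ : Ordinal.{0}} (h : M.LoopsBetween x α (α + δ))
    (hξ : IsSuccLimit ξ) (ih : ∀ ζ < ξ, M.snap x (α + δ * ζ) = M.snap x α) :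
    M.snap x (α + δ * ξ) = M.snap x α := by
  have hδ : 0 < δ := by simpa using h.lt
  have hlim : IsSuccLimit (δ * ξ) := isSuccLimit_mul_right hδ hξ
  have hlim' : IsSuccLimit (α + δ * ξ) := isSuccLimit_add α hlim
  refine (snap_eq_snap_iff_of_isSuccLimit hlim' h.isSuccLimit).2 fun i n => ?_
  rw [tape_snap_of_isSuccLimit hlim', FrequentlyBelow.add_iff hlim]
  constructor
  · intro hfreq
    obtain ⟨γ, -, hγ, htape⟩ := hfreq 0 hlim.bot_lt
    have hdiv : γ / δ < ξ := (lt_mul_iff_div_lt hδ.ne').1 hγ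
    rw [← div_add_mod γ δ, ← add_assoc, snap_add_congr (ih _ hdiv)] at htape
    exact Bool.le_iff_imp.1 (h.tape_le (α + γ % δ) le_self_add
      (by gcongr; exact mod_lt γ hδ.ne') i n) htape
  · intro htape
    refine FrequentlyBelow.of_isNormal (isNormal_mul_right hδ) hξ ?_
    exact fun ζ hζ => ⟨ζ, le_rfl, hζ, by rwa [← ih ζ hζ] at htape⟩

theorem snap_add_mul_eq {δ : Ordinal.{0}} (h : M.LoopsBetween x α (α + δ)) (ξ : Ordinal.{0}) :
    M.snap x (α + δ * ξ) = M.snap x α := by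
  induction ξ using Ordinal.limitRecOn with
  | zero => rw [mul_zero, add_zero]
  | add_one ξ ih => rw [mul_add_one, ← add_assoc, snap_add_congr ih, h.snap_eq]
  | limit ξ hξ ih => exact h.snap_add_mul_eq_of_forall_lt hξ ih

theorem exists_lt_snap_eq (h : M.LoopsBetween x α β) (γ : Ordinal.{0}) :
    ∃ γ' < β, M.snap x γ = M.snap x γ' := by
  obtain ⟨δ, rfl⟩ := exists_add_of_le h.lt.le
  have hδ : δ ≠ 0 := by
    rintro rfl
    simpa using h.lt
  rcases lt_or_ge γ α with hγ | hγ
  · exact ⟨γ, hγ.trans h.lt, rfl⟩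
  · obtain ⟨ζ, rfl⟩ := exists_add_of_le hγ
    refine ⟨α + ζ % δ, by gcongr; exact mod_lt ζ hδ, ?_⟩
    conv_lhs => rw [← div_add_mod ζ δ, ← add_assoc]
    exact snap_add_congr (h.snap_add_mul_eq _) _

theorem not_halts (h : M.LoopsBetween x α β) : ¬ M.halts x := by
  rintro ⟨γ, hγ⟩
  obtain ⟨γ', hγ', hsnap⟩ := h.exists_lt_snap_eq γ
  exact h.not_haltedAt γ' hγ' (by rwa [haltedAt, ← hsnap])

end LoopsBetween

theorem exists_lt_snap_eq_of_aleph0_lt_cof {c : Ordinal.{0}} (hc : ℵ₀ < c.cof) (M : Machine)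
    (x : R) :
    ∃ δ < c, (∀ γ, δ ≤ γ → γ < c → (M.snap x γ).tape ≤ (M.snap x c).tape) ∧
      ∀ β < c, ∃ α, β < α ∧ α < c ∧ IsSuccLimit α ∧ M.snap x α = M.snap x c := by
  have hlim : IsSuccLimit c := one_lt_cof_iff.1 (one_lt_aleph0.trans hc)
  let shows : Fin 3 × ℕ → Ordinal → Prop := fun p γ => (M.snap x γ).tape p.1 p.2 = true
  obtain ⟨δ, hδc, hδ⟩ := FrequentlyBelow.exists_forall_not
    (ι := {p // ¬ FrequentlyBelow (shows p) c}) (P := fun p => shows p)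
    (mk_le_aleph0.trans_lt hc) fun p => p.2
  have hle : ∀ γ, δ ≤ γ → γ < c → (M.snap x γ).tape ≤ (M.snap x c).tape := fun γ hδγ hγc i n =>
    Bool.le_iff_imp.2 fun hγ => (tape_snap_of_isSuccLimit hlim i n).2 <|
      by_contra fun hp => hδ ⟨(i, n), hp⟩ γ hδγ hγc hγ
  refine ⟨δ, hδc, hle, fun β hβ => ?_⟩
  obtain ⟨α, hα, hαc, hαlim, hfreq⟩ := FrequentlyBelow.exists_isSuccLimit_between hc
    (ι := {p // FrequentlyBelow (shows p) c}) (P := fun p => shows p)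
    (mk_le_aleph0.trans_lt hc) (fun p => p.2) (max_lt hβ hδc)
  refine ⟨α, (le_max_left _ _).trans_lt hα, hαc, hαlim,
    (snap_eq_snap_iff_of_isSuccLimit hαlim hlim).2 fun i n => ⟨fun h => ?_, fun h => ?_⟩⟩
  · exact Bool.le_iff_imp.1 (hle α ((le_max_right _ _).trans hα.le) hαc i n) h
  · exact (tape_snap_of_isSuccLimit hαlim i n).2
      (hfreq ⟨(i, n), (tape_snap_of_isSuccLimit hlim i n).1 h⟩)

theorem exists_loopsBetween {c : Ordinal.{0}} (hc : ℵ₀ < c.cof) (h : ∀ γ < c, ¬ M.haltedAt x γ) :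
    ∃ α β, β < c ∧ M.LoopsBetween x α β := by
  obtain ⟨δ, hδc, hle, hsnap⟩ := exists_lt_snap_eq_of_aleph0_lt_cof hc M x
  obtain ⟨α, hδα, hαc, hαlim, hα⟩ := hsnap δ hδc
  obtain ⟨β, hαβ, hβc, -, hβ⟩ := hsnap α hαc
  refine ⟨α, β, hβc, hαlim, hαβ, hβ.trans hα.symm, fun γ hαγ hγβ => ?_,
    fun γ hγ => h γ (hγ.trans hβc)⟩
  rw [hα]
  exact hle γ (hδα.le.trans hαγ) (hγβ.trans hβc)

theorem halts_iff_exists_haltsAt : M.halts x ↔ ∃ α, M.haltsAt x α := by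
  refine ⟨fun h => ?_, fun ⟨α, hα⟩ => ⟨α, hα.1⟩⟩
  obtain ⟨α, hα, hmin⟩ := WellFounded.has_min Ordinal.lt_wf {γ | M.haltedAt x γ} h
  exact ⟨α, hα, fun β hβ h => hmin β h hβ⟩

theorem haltsAt.unique (hα : M.haltsAt x α) (hβ : M.haltsAt x β) : α = β :=
  le_antisymm (not_lt.1 fun h => hα.2 β h hβ.1) (not_lt.1 fun h => hβ.2 α h hα.1)

theorem haltsAt.lt_omega_one (hα : M.haltsAt x α) : α < ω₁ := by
  by_contra! hle
  obtain ⟨_, _, -, hloop⟩ := exists_loopsBetween aleph0_lt_cof_omega_one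
    fun γ hγ => hα.2 γ (hγ.trans_le hle)
  exact hloop.not_halts ⟨α, hα.1⟩

end Machine

/-! ### Naming the stages of a countable computation -/

/-- A relation `r` is the order of stages when `i` names the stage `o i`: comparison under `r` is
comparison of ordinals, and the named stages form an initial segment. Distinct names of the same
stage are allowed, so that finite initial segments are covered too. -/
structure IsStaging {ι : Type*} (r : ι → ι → Prop) (o : ι → Ordinal) : Prop where
  rel_iff : ∀ {i j}, r i j ↔ o i < o j
  isLowerSet_range : IsLowerSet (Set.range o)

/-- `j` covers `i` for the relation `r`; unlike `CovBy` this does not require an order instance. -/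
def RelCovBy {ι : Type*} (r : ι → ι → Prop) (i j : ι) : Prop :=
  r i j ∧ ∀ k, r i k → ¬ r k j

/-- `j` is neither minimal for the relation `r` nor covers another element, that is, `j` names a
limit stage. -/
def IsRelLimit {ι : Type*} (r : ι → ι → Prop) (j : ι) : Prop :=
  (∃ i, r i j) ∧ ∀ i, ¬ RelCovBy r i j

theorem exists_isStaging_iff.{u} {ι : Type u} {r : ι → ι → Prop} :
    (∃ o : ι → Ordinal.{u}, IsStaging r o) ↔
      WellFounded r ∧ ∀ i j k, r i k → r i j ∨ r j k := by
  constructor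
  · rintro ⟨o, ho⟩
    refine ⟨Subrelation.wf ho.rel_iff.1 (InvImage.wf o Ordinal.lt_wf), fun i j k hik => ?_⟩
    simp only [ho.rel_iff] at hik ⊢
    exact (lt_or_ge (o i) (o j)).imp_right fun hji => hji.trans_lt hik
  · rintro ⟨hwf, htrans⟩
    have : IsWellFounded ι r := ⟨hwf⟩
    refine ⟨IsWellFounded.rank r, fun {i j} => ⟨IsWellFounded.rank_lt_of_rel, fun hij => ?_⟩, ?_⟩
    · by_contra hnot
      refine hij.not_ge ?_
      rw [IsWellFounded.rank_eq r j]
      exact Ordinal.iSup_le fun k => succ_le_of_lt <|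
        IsWellFounded.rank_lt_of_rel ((htrans k i j k.2).resolve_right hnot)
    · rintro _ β hβ ⟨j, rfl⟩
      exact IsWellFounded.mem_range_rank_of_le hβ

namespace IsStaging

variable {ι : Type*} {r : ι → ι → Prop} {o : ι → Ordinal} {i j : ι}

theorem exists_lt_iff (ho : IsStaging r o) {P : Ordinal → Prop} :
    (∃ β < o j, P β) ↔ ∃ i, r i j ∧ P (o i) := by
  simp only [ho.rel_iff]
  refine ⟨fun ⟨β, hβ, h⟩ => ?_, fun ⟨i, hi, h⟩ => ⟨o i, hi, h⟩⟩
  obtain ⟨i, rfl⟩ := ho.isLowerSet_range hβ.le ⟨j, rfl⟩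
  exact ⟨i, hβ, h⟩

theorem forall_lt_iff (ho : IsStaging r o) {P : Ordinal → Prop} :
    (∀ β < o j, P β) ↔ ∀ i, r i j → P (o i) := by
  have := ho.exists_lt_iff (j := j) (P := fun β => ¬ P β)
  simpa using not_congr this

theorem frequentlyBelow_iff (ho : IsStaging r o) {P : Ordinal → Prop} :
    FrequentlyBelow P (o j) ↔ ∀ i, r i j → ∃ k, ¬ r k i ∧ r k j ∧ P (o k) := by
  have hex : ∀ i, (∃ γ, o i ≤ γ ∧ γ < o j ∧ P γ) ↔ ∃ k, ¬ r k i ∧ r k j ∧ P (o k) := fun i => by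
    simp only [ho.rel_iff (j := i), not_lt, and_left_comm (a := o i ≤ _)]
    exact ho.exists_lt_iff
  exact ho.forall_lt_iff.trans (forall₂_congr fun i _ => hex i)

theorem eq_zero_iff (ho : IsStaging r o) : o j = 0 ↔ ∀ i, ¬ r i j := by
  rw [← bot_eq_zero', ← isMin_iff_eq_bot, isMin_iff_forall_not_lt]
  exact ho.forall_lt_iff (P := fun _ => False)

theorem covBy_iff (ho : IsStaging r o) : o i ⋖ o j ↔ RelCovBy r i j := by
  have hbetween : (∀ β, o i < β → ¬ β < o j) ↔ ∀ k, r i k → ¬ r k j := by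
    simpa only [ho.rel_iff (i := i), imp_not_comm] using
      ho.forall_lt_iff (j := j) (P := fun β => ¬ o i < β)
  exact and_congr ho.rel_iff.symm hbetween

theorem eq_add_one_iff (ho : IsStaging r o) : o j = o i + 1 ↔ RelCovBy r i j := by
  rw [← ho.covBy_iff, covBy_iff_add_one_eq, eq_comm]

theorem isSuccLimit_iff (ho : IsStaging r o) : IsSuccLimit (o j) ↔ IsRelLimit r j := by
  have hmin : ¬ IsMin (o j) ↔ ∃ i, r i j := by
    rw [isMin_iff_eq_bot, bot_eq_zero', ho.eq_zero_iff, not_forall_not]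
  have hcov : (∀ β, ¬ β ⋖ o j) ↔ ∀ i, ¬ RelCovBy r i j := by
    simp only [← ho.covBy_iff]
    refine ⟨fun h i => h (o i), fun h β hβ => ?_⟩
    obtain ⟨i, rfl⟩ := ho.isLowerSet_range hβ.le ⟨j, rfl⟩
    exact h i hβ
  exact (Order.isSuccLimit_iff _).trans (and_congr hmin hcov)

end IsStaging

/-! ### Codes for countable runs -/

/-- Codes for countable runs of a machine: a relation on `ℕ` comparing the stages named by natural
numbers, and the snapshots at these stages. -/
abbrev RunCode (Q : ℕ) : Type := (ℕ → ℕ → Bool) × (ℕ → Snapshot Q)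

namespace RunCode

/-- The stage named by `m` precedes the stage named by `n`. -/
def Lt {Q : ℕ} (w : RunCode Q) (m n : ℕ) : Prop := w.1 m n = true

/-- The snapshot at the stage named by `m`. -/
def snapshot {Q : ℕ} (w : RunCode Q) (m : ℕ) : Snapshot Q := w.2 m

/-- The `lim sup`, cell by cell, of the tapes before the stage named by `m`. -/
noncomputable def limitTape {Q : ℕ} (w : RunCode Q) (m : ℕ) : Fin 3 → ℕ → Bool := fun i n =>
  decide (∀ k, w.Lt k m → ∃ j, ¬ w.Lt j k ∧ w.Lt j m ∧ (w.snapshot j).tape i n = true)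

/-- The snapshot at the stage named by `m` arises from the earlier ones by the rules of the
computation of `M` on `x`. -/
def LocallyCorrectAt (M : Machine) (x : R) (w : RunCode M.Q) (m : ℕ) : Prop :=
  ((∀ k, ¬ w.Lt k m) → w.snapshot m = M.init x) ∧
  (∀ k, RelCovBy w.Lt k m → w.snapshot m = M.stepSnap (w.snapshot k)) ∧
  (IsRelLimit w.Lt m → w.snapshot m = M.limitSnap (w.limitTape m))

/-- `w` describes the computation of `M` on `x` along an initial segment of the stages. -/
def Codes (M : Machine) (x : R) (w : RunCode M.Q) : Prop :=
  ∃ o : ℕ → Ordinal.{0}, IsStaging w.Lt o ∧ ∀ m, w.snapshot m = M.snap x (o m)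

/-- The stage named by `m` is the first one in the halting state. -/
def HaltsAt (M : Machine) (w : RunCode M.Q) (m : ℕ) : Prop :=
  (w.snapshot m).state = M.halt ∧ ∀ k, w.Lt k m → (w.snapshot k).state ≠ M.halt

/-- `Machine.LoopsBetween` for the stages named by `a` and `b`, read off the code. -/
def LoopsBetween (M : Machine) (w : RunCode M.Q) (a b : ℕ) : Prop :=
  IsRelLimit w.Lt a ∧ w.Lt a b ∧ w.snapshot b = w.snapshot a ∧
    (∀ k, ¬ w.Lt k a → w.Lt k b → (w.snapshot k).tape ≤ (w.snapshot a).tape) ∧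
    ∀ k, w.Lt k b → (w.snapshot k).state ≠ M.halt

variable {M : Machine} {x : R} {w : RunCode M.Q} {o : ℕ → Ordinal.{0}} {m : ℕ}

theorem limitTape_eq (ho : IsStaging w.Lt o)
    (h : ∀ k, w.Lt k m → w.snapshot k = M.snap x (o k)) :
    w.limitTape m = fun i n =>
      decide (FrequentlyBelow (fun γ => (M.snap x γ).tape i n = true) (o m)) := by
  funext i n
  refine decide_eq_decide.2 (Iff.trans ?_ ho.frequentlyBelow_iff.symm)
  exact forall₂_congr fun k _ => exists_congr fun j => and_congr_right fun _ =>
    and_congr_right fun hj => by rw [h j hj]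

theorem locallyCorrectAt_iff (ho : IsStaging w.Lt o)
    (h : ∀ k, w.Lt k m → w.snapshot k = M.snap x (o k)) :
    LocallyCorrectAt M x w m ↔ w.snapshot m = M.snap x (o m) := by
  have hsucc : (∀ k, RelCovBy w.Lt k m → w.snapshot m = M.stepSnap (w.snapshot k)) ↔
      ∀ β, o m = β + 1 → w.snapshot m = M.stepSnap (M.snap x β) := by
    constructor
    · intro hcov β hβ
      obtain ⟨k, rfl⟩ := ho.isLowerSet_range ((lt_add_one β).le.trans_eq hβ.symm) ⟨m, rfl⟩
      have hkm := ho.eq_add_one_iff.1 hβ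
      rw [hcov k hkm, h k hkm.1]
    · intro hβ k hkm
      rw [h k hkm.1, hβ (o k) (ho.eq_add_one_iff.2 hkm)]
  rw [LocallyCorrectAt, hsucc, ← ho.eq_zero_iff, ← ho.isSuccLimit_iff, limitTape_eq ho h,
    Machine.eq_snap_iff]

theorem codes_iff :
    Codes M x w ↔ WellFounded w.Lt ∧
      (∀ i j k, w.Lt i k → w.Lt i j ∨ w.Lt j k) ∧ ∀ m, LocallyCorrectAt M x w m := by
  rw [← and_assoc, ← exists_isStaging_iff, exists_and_right.symm]
  refine exists_congr fun o => and_congr_right fun ho => ?_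
  refine ⟨fun h m => (locallyCorrectAt_iff ho fun k _ => h k).2 (h m), fun h m => ?_⟩
  induction hm : o m using WellFoundedLT.induction generalizing m with
  | ind α ih =>
    subst hm
    exact (locallyCorrectAt_iff ho fun k hk => ih _ (ho.rel_iff.1 hk) k rfl).1 (h m)

theorem exists_codes (M : Machine) (x : R) {α : Ordinal.{0}} (hα : α < ω₁) :
    ∃ (w : RunCode M.Q) (o : ℕ → Ordinal.{0}), IsStaging w.Lt o ∧
      (∀ m, w.snapshot m = M.snap x (o m)) ∧ ∀ β ≤ α, ∃ m, o m = β := by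
  have : Countable (Set.Iic α) := countable_Iic_of_lt_omega_one hα
  obtain ⟨e, he⟩ := exists_surjective_nat (Set.Iic α)
  have hrange : ∀ β ≤ α, ∃ m, (e m : Ordinal) = β := fun β hβ =>
    (he ⟨β, hβ⟩).imp fun m hm => congrArg Subtype.val hm
  refine ⟨⟨fun m n => decide ((e m : Ordinal) < e n), fun m => M.snap x (e m)⟩,
    fun m => e m, ⟨decide_eq_true_iff, ?_⟩, fun m => rfl, hrange⟩
  rintro _ β hβ ⟨m, rfl⟩
  exact hrange β (hβ.trans (e m).2)

theorem haltsAt_iff (ho : IsStaging w.Lt o) (h : ∀ m, w.snapshot m = M.snap x (o m)) :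
    HaltsAt M w m ↔ M.haltsAt x (o m) := by
  simp only [HaltsAt, h, Machine.haltsAt, Machine.haltedAt]
  exact and_congr_right' (ho.forall_lt_iff (P := fun γ => ¬ M.haltedAt x γ)).symm

theorem loopsBetween_iff (ho : IsStaging w.Lt o) (h : ∀ m, w.snapshot m = M.snap x (o m))
    {a b : ℕ} : LoopsBetween M w a b ↔ M.LoopsBetween x (o a) (o b) := by
  have htape : (∀ k, ¬ w.Lt k a → w.Lt k b → (w.snapshot k).tape ≤ (w.snapshot a).tape) ↔
      ∀ γ, o a ≤ γ → γ < o b → (M.snap x γ).tape ≤ (M.snap x (o a)).tape := by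
    simp only [h, ho.rel_iff (j := a), not_lt, imp.swap (a := o a ≤ _)]
    exact (ho.forall_lt_iff
      (P := fun γ => o a ≤ γ → (M.snap x γ).tape ≤ (M.snap x (o a)).tape)).symm
  have hstate : (∀ k, w.Lt k b → (w.snapshot k).state ≠ M.halt) ↔
      ∀ γ < o b, ¬ M.haltedAt x γ := by
    simp only [h]
    exact (ho.forall_lt_iff (P := fun γ => ¬ M.haltedAt x γ)).symm
  rw [LoopsBetween, htape, hstate, ← ho.isSuccLimit_iff, ho.rel_iff, h, h]
  exact ⟨fun ⟨hlim, hlt, hsnap, hle, hhalt⟩ => ⟨hlim, hlt, hsnap, hle, hhalt⟩,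
    fun ⟨hlim, hlt, hsnap, hle, hhalt⟩ => ⟨hlim, hlt, hsnap, hle, hhalt⟩⟩

theorem exists_codes_haltsAt_iff {p : Snapshot M.Q → Prop} :
    (∃ w, Codes M x w ∧ ∃ m, HaltsAt M w m ∧ p (w.snapshot m)) ↔
      ∃ α, M.haltsAt x α ∧ p (M.snap x α) := by
  constructor
  · rintro ⟨w, ⟨o, ho, hsnap⟩, m, hm, hp⟩
    exact ⟨o m, (haltsAt_iff ho hsnap).1 hm, hsnap m ▸ hp⟩
  · rintro ⟨α, hα, hp⟩
    obtain ⟨w, o, ho, hsnap, hrange⟩ := exists_codes M x hα.lt_omega_one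
    obtain ⟨m, rfl⟩ := hrange α le_rfl
    exact ⟨w, ⟨o, ho, hsnap⟩, m, (haltsAt_iff ho hsnap).2 hα, (hsnap m).symm ▸ hp⟩

theorem exists_codes_loopsBetween_iff :
    (∃ w, Codes M x w ∧ ∃ a b, LoopsBetween M w a b) ↔ ¬ M.halts x := by
  refine ⟨fun ⟨w, ⟨o, ho, hsnap⟩, a, b, hab⟩ => ((loopsBetween_iff ho hsnap).1 hab).not_halts,
    fun h => ?_⟩
  obtain ⟨α, β, hβ, hloop⟩ :=
    Machine.exists_loopsBetween aleph0_lt_cof_omega_one fun γ _ hγ => h ⟨γ, hγ⟩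
  obtain ⟨w, o, ho, hsnap, hrange⟩ := exists_codes M x hβ
  obtain ⟨a, rfl⟩ := hrange α hloop.lt.le
  obtain ⟨b, rfl⟩ := hrange β le_rfl
  exact ⟨w, ⟨o, ho, hsnap⟩, a, b, (loopsBetween_iff ho hsnap).2 hloop⟩

end RunCode

/-! ### Borel measurability of the coding -/

theorem measurable_apply_of_countable {X ι Y : Type*} [MeasurableSpace X] [MeasurableSpace Y]
    [Countable ι] [MeasurableSpace ι] [MeasurableSingletonClass ι] {f : X → ι → Y} {i : X → ι}
    (hf : Measurable f) (hi : Measurable i) : Measurable fun a => f a (i a) :=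
  (measurable_from_prod_countable_left (f := fun p : (ι → Y) × ι => p.1 p.2)
    measurable_pi_apply).comp (hf.prodMk hi)

namespace Snapshot

variable {Q : ℕ}

/-- A snapshot as a triple, the source of its topological and Borel structure. -/
def equivProd (Q : ℕ) : Snapshot Q ≃ Fin (Q + 1) × ℕ × (Fin 3 → ℕ → Bool) where
  toFun s := (s.state, s.head, s.tape)
  invFun p := ⟨p.1, p.2.1, p.2.2⟩
  left_inv _ := rfl
  right_inv _ := rfl

instance : TopologicalSpace (Snapshot Q) := .induced (equivProd Q) inferInstance

instance : PolishSpace (Snapshot Q) := (equivProd Q).polishSpace_induced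

instance : MeasurableSpace (Snapshot Q) := borel _

instance : BorelSpace (Snapshot Q) := ⟨rfl⟩

instance : Nonempty (Snapshot Q) := ⟨⟨0, 0, fun _ _ => false⟩⟩

theorem measurable_equivProd : Measurable (equivProd Q) :=
  continuous_induced_dom.measurable

theorem measurable_equivProd_symm : Measurable (equivProd Q).symm :=
  ((equivProd Q).toHomeomorphOfIsInducing ⟨rfl⟩).symm.continuous.measurable

@[fun_prop]
theorem measurable_state : Measurable (state : Snapshot Q → Fin (Q + 1)) :=
  measurable_fst.comp measurable_equivProd

@[fun_prop]
theorem measurable_head : Measurable (head : Snapshot Q → ℕ) :=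
  (measurable_fst.comp measurable_snd).comp measurable_equivProd

@[fun_prop]
theorem measurable_tape : Measurable (tape : Snapshot Q → Fin 3 → ℕ → Bool) :=
  (measurable_snd.comp measurable_snd).comp measurable_equivProd

@[fun_prop]
theorem measurable_mk {X : Type*} [MeasurableSpace X] {q : X → Fin (Q + 1)} {h : X → ℕ}
    {t : X → Fin 3 → ℕ → Bool} (hq : Measurable q) (hh : Measurable h) (ht : Measurable t) :
    Measurable fun a => mk (q a) (h a) (t a) :=
  measurable_equivProd_symm.comp (hq.prodMk (hh.prodMk ht))

end Snapshot

namespace Machine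

variable (M : Machine)

@[fun_prop]
theorem measurable_init : Measurable M.init := by
  unfold init
  refine Snapshot.measurable_mk measurable_const measurable_const ?_
  refine measurable_pi_lambda _ fun i => measurable_pi_lambda _ fun n => ?_
  split_ifs <;> fun_prop

@[fun_prop]
theorem measurable_stepSnap : Measurable M.stepSnap := by
  have hread : ∀ i, Measurable fun s : Snapshot M.Q => s.tape i s.head := fun i =>
    measurable_apply_of_countable (by fun_prop) (by fun_prop)
  have htrans : Measurable fun s : Snapshot M.Q => M.trans (s.state, fun i => s.tape i s.head) :=
    Measurable.of_discrete.comp (by fun_prop)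
  refine Snapshot.measurable_mk (by fun_prop) ?_ ?_
  · refine .ite (measurableSet_setOfPred.2 (.eq ?_ ?_)) ?_ ?_ <;> fun_prop
  · refine measurable_pi_lambda _ fun i => measurable_pi_lambda _ fun n => ?_
    refine .ite (measurableSet_eq_fun ?_ ?_) ?_ ?_ <;> fun_prop

@[fun_prop]
theorem measurable_limitSnap : Measurable M.limitSnap :=
  Snapshot.measurable_mk measurable_const measurable_const measurable_id

end Machine

namespace RunCode

variable {Q : ℕ} {M : Machine} {X : Type*} [MeasurableSpace X]

theorem measurable_lt_apply {w : X → RunCode Q} {m n : X → ℕ} (hw : Measurable w)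
    (hm : Measurable m) (hn : Measurable n) : Measurable fun a => (w a).Lt (m a) (n a) :=
  .eq (measurable_apply_of_countable (measurable_apply_of_countable hw.fst hm) hn)
    measurable_const

variable {w : X → RunCode Q} {m n : ℕ}

@[fun_prop]
theorem measurable_snapshot (hw : Measurable w) : Measurable fun a => (w a).snapshot m :=
  hw.snd.eval

@[fun_prop]
theorem measurable_lt (hw : Measurable w) : Measurable fun a => (w a).Lt m n :=
  measurable_lt_apply hw measurable_const measurable_const

@[fun_prop]
theorem measurable_relCovBy (hw : Measurable w) : Measurable fun a => RelCovBy (w a).Lt m n := by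
  unfold RelCovBy
  fun_prop

@[fun_prop]
theorem measurable_isRelLimit (hw : Measurable w) : Measurable fun a => IsRelLimit (w a).Lt m := by
  unfold IsRelLimit
  fun_prop

@[fun_prop]
theorem measurable_limitTape (hw : Measurable w) : Measurable fun a => (w a).limitTape m := by
  refine measurable_pi_lambda _ fun i => measurable_pi_lambda _ fun n => measurable_to_bool ?_
  simp only [limitTape, Set.preimage, Set.mem_singleton_iff, decide_eq_true_eq]
  refine measurableSet_setOfPred.2 ?_
  fun_prop

@[fun_prop]
theorem measurable_locallyCorrectAt {x : X → R} {w : X → RunCode M.Q} (hx : Measurable x)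
    (hw : Measurable w) : Measurable fun a => LocallyCorrectAt M (x a) (w a) m := by
  unfold LocallyCorrectAt
  fun_prop

@[fun_prop]
theorem measurable_haltsAt {w : X → RunCode M.Q} (hw : Measurable w) :
    Measurable fun a => HaltsAt M (w a) m := by
  unfold HaltsAt
  fun_prop

@[fun_prop]
theorem measurable_loopsBetween {w : X → RunCode M.Q} (hw : Measurable w) :
    Measurable fun a => LoopsBetween M (w a) m n := by
  simp only [LoopsBetween, Pi.le_def, Bool.le_iff_imp]
  fun_prop

end RunCode

/-! ### Projections of coanalytic sets -/

theorem uncountable_pi_of_infinite {ι Y : Type*} [Infinite ι] [Nontrivial Y] :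
    Uncountable (ι → Y) := by
  obtain ⟨y, z, hyz⟩ := exists_pair_ne Y
  have hinj : Function.Injective fun (s : Set ι) i => if i ∈ s then y else z := fun s t hst =>
    Set.ext fun i => by grind [congrFun hst i]
  have : Uncountable (Set ι) := by
    simpa [← aleph0_lt_mk_iff] using (aleph0_le_mk ι).trans_lt (cantor #ι)
  exact hinj.uncountable

theorem exists_measurable_surjective {Y W : Type*} [MeasurableSpace Y] [StandardBorelSpace Y]
    [Uncountable Y] [MeasurableSpace W] [StandardBorelSpace W] [Nonempty W] :
    ∃ e : Y → W, Measurable e ∧ Function.Surjective e := by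
  let _ := upgradeStandardBorel W
  obtain ⟨g, hg, hsurj⟩ := PolishSpace.exists_nat_nat_continuous_surjective W
  have e : Y ≃ᵐ (ℕ → ℕ) := PolishSpace.measurableEquivOfNotCountable
    (not_countable_iff.2 inferInstance) (not_countable_iff.2 uncountable_pi_of_infinite)
  exact ⟨g ∘ e, hg.measurable.comp e.measurable, hsurj.comp e.surjective⟩

instance : PolishSpace R where

/-- The class `Σ¹₂` in an arbitrary space `X`: projections along Cantor space of coanalytic subsets
of `X × R`. -/
def IsProjCoanalytic {X : Type*} [TopologicalSpace X] (S : Set X) : Prop :=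
  ∃ C : Set (X × R), AnalyticSet Cᶜ ∧ S = {q | ∃ z, (q, z) ∈ C}

theorem IsProjCoanalytic.union {X : Type*} [TopologicalSpace X] [T2Space X] {S T : Set X}
    (hS : IsProjCoanalytic S) (hT : IsProjCoanalytic T) : IsProjCoanalytic (S ∪ T) := by
  obtain ⟨C, hC, rfl⟩ := hS
  obtain ⟨D, hD, rfl⟩ := hT
  refine ⟨C ∪ D, ?_, ?_⟩
  · rw [Set.compl_union, Set.inter_eq_iInter]
    exact .iInter (Bool.forall_bool.2 ⟨hD, hC⟩)
  · simp only [Set.mem_union, exists_or, Set.ofPred_or]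

theorem IsProjCoanalytic.isProjCoanalytic2 {S : Set (R × R)} (hS : IsProjCoanalytic S) :
    IsProjCoanalytic2 S := by
  obtain ⟨C, hC, rfl⟩ := hS
  exact ⟨(Homeomorph.prodAssoc R R R).symm ⁻¹' C, hC.preimage (Homeomorph.continuous _), rfl⟩

section

variable {X : Type*} [TopologicalSpace X] [PolishSpace X] [MeasurableSpace X] [BorelSpace X]

theorem isProjCoanalytic_exists_forall {W F : Type*} [MeasurableSpace W] [StandardBorelSpace W]
    [Nonempty W] [MeasurableSpace F] [StandardBorelSpace F] {D : X → W → F → Prop}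
    (hD : Measurable fun p : X × W × F => D p.1 p.2.1 p.2.2) :
    IsProjCoanalytic {q | ∃ w, ∀ f, D q w f} := by
  have : Uncountable R := uncountable_pi_of_infinite
  obtain ⟨e, he, hsurj⟩ := exists_measurable_surjective (Y := R) (W := W)
  refine ⟨{p | ∀ f, D p.1 (e p.2) f}, ?_, Set.ext fun q => hsurj.exists⟩
  have hcompl : {p : X × R | ∀ f, D p.1 (e p.2) f}ᶜ =
      (fun p : (X × R) × F => p.1) '' {p | ¬ D p.1.1 (e p.1.2) p.2} := by
    ext p
    simp
  rw [hcompl]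
  refine MeasurableSet.analyticSet_image (measurableSet_setOfPred.2 (Measurable.not ?_))
    measurable_fst
  exact hD.comp (f := fun p : (X × R) × F => (p.1.1, e p.1.2, p.2)) (by fun_prop)

variable {M : Machine} {x : X → R}

theorem isProjCoanalytic_exists_codes (hx : Measurable x) {P : X → RunCode M.Q → Prop}
    (hP : Measurable fun p : X × RunCode M.Q => P p.1 p.2) :
    IsProjCoanalytic {q | ∃ w, RunCode.Codes M (x q) w ∧ P q w} := by
  have hcodes : ∀ q, (∃ w, RunCode.Codes M (x q) w ∧ P q w) ↔
      ∃ w : RunCode M.Q, ∀ f : ℕ → ℕ, (¬ ∀ n, w.Lt (f (n + 1)) (f n)) ∧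
        (∀ i j k, w.Lt i k → w.Lt i j ∨ w.Lt j k) ∧
          (∀ m, RunCode.LocallyCorrectAt M (x q) w m) ∧ P q w := fun q => by
    simp only [RunCode.codes_iff, wellFounded_iff_isEmpty_descending_chain, isEmpty_subtype,
      and_assoc, ← forall_and_right]
  simp only [hcodes]
  have : Measurable fun p : X × RunCode M.Q × (ℕ → ℕ) => P p.1 p.2.1 :=
    hP.comp (f := fun p : X × RunCode M.Q × (ℕ → ℕ) => (p.1, p.2.1)) (by fun_prop)
  have hlt (n) : Measurable fun p : X × RunCode M.Q × (ℕ → ℕ) =>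
      p.2.1.Lt (p.2.2 (n + 1)) (p.2.2 n) :=
    RunCode.measurable_lt_apply (by fun_prop) (by fun_prop) (by fun_prop)
  refine isProjCoanalytic_exists_forall ?_
  fun_prop

theorem isProjCoanalytic_haltsAt (hx : Measurable x) {p : X → Snapshot M.Q → Prop}
    (hp : Measurable fun a : X × Snapshot M.Q => p a.1 a.2) :
    IsProjCoanalytic {q | ∃ α, M.haltsAt (x q) α ∧ p q (M.snap (x q) α)} := by
  simp only [← RunCode.exists_codes_haltsAt_iff]
  have : ∀ m, Measurable fun a : X × RunCode M.Q => p a.1 (a.2.snapshot m) := fun m =>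
    hp.comp (f := fun a : X × RunCode M.Q => (a.1, a.2.snapshot m)) (by fun_prop)
  exact isProjCoanalytic_exists_codes hx (by fun_prop)

theorem isProjCoanalytic_not_halts (hx : Measurable x) :
    IsProjCoanalytic {q | ¬ M.halts (x q)} := by
  simp only [← RunCode.exists_codes_loopsBetween_iff]
  exact isProjCoanalytic_exists_codes hx (by fun_prop)

end

theorem Machine.not_outputs_iff {M : Machine} {x y : R} :
    ¬ M.outputs x y ↔ (∃ α, M.haltsAt x α ∧ (M.snap x α).tape 2 ≠ y) ∨ ¬ M.halts x := by
  constructor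
  · intro h
    refine or_iff_not_imp_right.2 fun hx => ?_
    obtain ⟨α, hα⟩ := M.halts_iff_exists_haltsAt.1 (not_not.1 hx)
    exact ⟨α, hα, fun hy => h ⟨α, hα, hy⟩⟩
  · rintro (⟨α, hα, hne⟩ | hx) ⟨β, hβ, rfl⟩
    · exact hne (by rw [hα.unique hβ])
    · exact hx ⟨β, hβ.1⟩

end ITTM

/-- **Complexity Theorem.** The graph of every infinite time computable
function is `Δ¹₂`: for every program, both the graph
`{(x,y) : φ_p(x) halts with output y}` and its complement are projections of
coanalytic sets. Consequently every infinite time semi-decidable set, and its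
complement, is the projection of a coanalytic set. -/
theorem graph_is_Delta_1_2 :
    (∀ M : ITTM.Machine,
      IsProjCoanalytic2 {q : ITTM.R × ITTM.R | M.outputs q.1 q.2} ∧
      IsProjCoanalytic2 {q : ITTM.R × ITTM.R | M.outputs q.1 q.2}ᶜ) ∧
    (∀ A : Set ITTM.R, ITTM.ITTMSemiDecidable A →
      IsProjCoanalytic1 A ∧ IsProjCoanalytic1 Aᶜ) := by
  open ITTM in
  refine ⟨fun M => ⟨?_, ?_⟩, ?_⟩
  · exact (isProjCoanalytic_haltsAt measurable_fst
      (p := fun q s => s.tape 2 = q.2) (by fun_prop)).isProjCoanalytic2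
  · simp only [Set.compl_ofPred, Machine.not_outputs_iff, Set.ofPred_or]
    exact ((isProjCoanalytic_haltsAt measurable_fst
      (p := fun q s => s.tape 2 ≠ q.2) (by fun_prop)).union
        (isProjCoanalytic_not_halts measurable_fst)).isProjCoanalytic2
  · rintro A ⟨M, rfl⟩
    have hhalts := isProjCoanalytic_haltsAt (M := M) measurable_id
      (p := fun _ _ => True) measurable_const
    simp only [and_true, ← Machine.halts_iff_exists_haltsAt] at hhalts
    exact ⟨hhalts, isProjCoanalytic_not_halts measurable_id⟩
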